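/- Suppose Pate's inequality per(A ⊗ J_k) ≥ per(A)^k (k!)^n holds for an n×n HPSD matrix A and all positive integers k, where J_k is the k×k all-ones matrix. Then per(A) ≤ max_{‖x‖²=n} ∏_{i=1}^n |⟨v_i, x⟩|², where A = V†V with columns v_i. -/

import Mathlib

open Matrix Finset ComplexOrder Kronecker

/-- The permanent of a square matrix. -/
noncomputable def perm {ι : Type*} [Fintype ι] [DecidableEq ι]
    (A : Matrix ι ι ℂ) : ℂ :=
  ∑ σ : Equiv.Perm ι, ∏ i, A i (σ i)

/-!
By Wick's formula, `per(A Aᴴ) = E ∏ᵢ |(A x)ᵢ|²` for a standard complex Gaussian vector `x`, and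
repeating each row of `A` `k` times gives `per((A Aᴴ) ⊗ J_k) = E (∏ᵢ |(A x)ᵢ|²)^k`. If `M` bounds
`∏ᵢ |(A x)ᵢ|²` on the sphere `‖x‖² = n`, then by homogeneity this is at most
`M^k n^(-nk) E ‖x‖^(2nk)`, where `E ‖x‖^(2nk)` is `(nk)!` times the number of monomials of degree
`nk`. Since `(nk)! ≤ n^(nk) (k!)^n`, Pate's inequality yields `per(A Aᴴ)^k ≤ c(k) M^k` with `c`
polynomial in `k`, and letting `k → ∞` in the `k`-th roots removes `c`.
-/

open MeasureTheory Filter Asymptotics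
open scoped Nat

/-- The standard complex Gaussian law `𝒞𝒩(0, 1)`, normalised so that `E|z|² = 1`. -/
noncomputable def complexGaussian : Measure ℂ :=
  volume.withDensity fun z ↦ ENNReal.ofReal (Real.exp (-‖z‖ ^ 2) / Real.pi)

instance : SigmaFinite complexGaussian :=
  SigmaFinite.withDensity_ofReal _

lemma integral_complexGaussian {E : Type*} [NormedAddCommGroup E] [NormedSpace ℝ E] (f : ℂ → E) :
    ∫ z, f z ∂complexGaussian = ∫ z : ℂ, (Real.exp (-‖z‖ ^ 2) / Real.pi) • f z := by
  rw [complexGaussian, integral_withDensity_eq_integral_toReal_smul (by fun_prop) (by simp)]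
  refine integral_congr_ae (.of_forall fun _ ↦ ?_)
  beta_reduce
  rw [ENNReal.toReal_ofReal (by positivity)]

lemma integral_norm_pow_complexGaussian (m : ℕ) :
    ∫ z, ‖z‖ ^ m ∂complexGaussian = Real.Gamma (m / 2 + 1) := by
  have h := Complex.integral_rpow_mul_exp_neg_rpow (p := 2) (q := m) one_le_two
    (by linarith [m.cast_nonneg (α := ℝ)])
  simp only [Real.rpow_natCast, Real.rpow_two] at h
  calc ∫ z, ‖z‖ ^ m ∂complexGaussian
      = Real.pi⁻¹ * ∫ z : ℂ, ‖z‖ ^ m * Real.exp (-‖z‖ ^ 2) := by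
        rw [integral_complexGaussian, ← integral_const_mul]
        refine integral_congr_ae (.of_forall fun _ ↦ ?_)
        simp only [smul_eq_mul]
        ring
    _ = Real.Gamma (m / 2 + 1) := by
        rw [h, add_div, div_self two_ne_zero]
        field_simp

lemma integrable_norm_pow_complexGaussian (m : ℕ) :
    Integrable (fun z ↦ ‖z‖ ^ m) complexGaussian := by
  refine .of_integral_ne_zero ?_
  rw [integral_norm_pow_complexGaussian]
  exact (Real.Gamma_pos_of_pos (by positivity)).ne'

lemma integral_norm_sq_pow_complexGaussian (m : ℕ) :
    ∫ z, (‖z‖ ^ 2) ^ m ∂complexGaussian = (m ! : ℝ) := by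
  simp only [← pow_mul, integral_norm_pow_complexGaussian, Nat.cast_mul, Nat.cast_ofNat]
  rw [mul_div_cancel_left₀ _ two_ne_zero, Real.Gamma_nat_eq_factorial]

lemma integrable_pow_mul_star_pow_complexGaussian (a b : ℕ) :
    Integrable (fun z ↦ z ^ a * star z ^ b) complexGaussian := by
  refine (integrable_norm_pow_complexGaussian (a + b)).mono' (by fun_prop) (.of_forall fun z ↦ ?_)
  rw [norm_mul, norm_pow, norm_pow, norm_star, pow_add]

lemma integral_complexGaussian_comp_rotation {E : Type*} [NormedAddCommGroup E] [NormedSpace ℝ E]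
    (f : ℂ → E) (c : Circle) :
    ∫ z, f (c * z) ∂complexGaussian = ∫ z, f z ∂complexGaussian := by
  have h := (rotation c).measurePreserving.integral_comp
    (rotation c).toHomeomorph.measurableEmbedding fun z ↦ (Real.exp (-‖z‖ ^ 2) / Real.pi) • f z
  simpa only [integral_complexGaussian, rotation_apply, norm_mul, Circle.norm_coe, one_mul] using h

lemma exists_circle_pow_mul_star_pow_eq_neg_one {a b : ℕ} (hab : a ≠ b) :
    ∃ c : Circle, (c : ℂ) ^ a * star (c : ℂ) ^ b = -1 := by
  have hsub : (a - b : ℂ) ≠ 0 := sub_ne_zero.2 (mod_cast hab)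
  refine ⟨Circle.exp (Real.pi / (a - b)), ?_⟩
  rw [RCLike.star_def, ← Circle.coe_inv_eq_conj, ← Circle.exp_neg, Circle.coe_exp, Circle.coe_exp,
    ← Complex.exp_nat_mul, ← Complex.exp_nat_mul, ← Complex.exp_add, ← Complex.exp_pi_mul_I]
  congr 1
  push_cast
  field_simp
  ring

lemma integral_pow_mul_star_pow_complexGaussian (a b : ℕ) :
    ∫ z, z ^ a * star z ^ b ∂complexGaussian = if a = b then (a ! : ℂ) else 0 := by
  split_ifs with hab
  · subst hab
    have hnorm (z : ℂ) : z ^ a * star z ^ a = ((‖z‖ ^ 2) ^ a : ℝ) := by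
      rw [← mul_pow, RCLike.star_def, Complex.mul_conj']
      push_cast
      rfl
    simp only [hnorm, integral_complex_ofReal, integral_norm_sq_pow_complexGaussian,
      Complex.ofReal_natCast]
  · obtain ⟨c, hc⟩ := exists_circle_pow_mul_star_pow_eq_neg_one hab
    have hrot := integral_complexGaussian_comp_rotation (fun z ↦ z ^ a * star z ^ b) c
    have hneg (z : ℂ) : (c * z) ^ a * star (c * z) ^ b = -(z ^ a * star z ^ b) := by
      rw [star_mul', mul_pow, mul_pow, mul_mul_mul_comm, hc, neg_one_mul]
    simp only [hneg, integral_neg] at hrot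
    exact self_eq_neg.1 hrot.symm

section Fiber

variable {ι κ : Type*} [Fintype κ] [DecidableEq ι]

/-- The multiplicity with which `f` takes the value `j`. -/
def fiberCard (f : κ → ι) (j : ι) : ℕ := #{i | f i = j}

lemma prod_comp_eq_prod_pow_fiberCard [Fintype ι] {R : Type*} [CommMonoid R] (x : ι → R)
    (f : κ → ι) : ∏ i, x (f i) = ∏ j, x j ^ fiberCard f j := by
  simp only [fiberCard, ← prod_const, prod_fiberwise' univ f x]

lemma fiberCard_comp_perm (f : κ → ι) (σ : Equiv.Perm κ) : fiberCard (f ∘ σ) = fiberCard f := by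
  ext j
  exact card_equiv σ (by simp)

lemma exists_perm_comp_eq_iff_fiberCard_eq {f g : κ → ι} :
    (∃ σ : Equiv.Perm κ, g ∘ σ = f) ↔ fiberCard f = fiberCard g := by
  refine ⟨?_, fun h ↦ ?_⟩
  · rintro ⟨σ, rfl⟩
    exact fiberCard_comp_perm g σ
  · have hfiber (j : ι) : Nonempty ({i // f i = j} ≃ {i // g i = j}) := by
      rw [← Fintype.card_eq, Fintype.card_subtype, Fintype.card_subtype]
      exact congrFun h j
    let e (j : ι) := (hfiber j).some
    refine ⟨(Equiv.sigmaFiberEquiv f).symm.trans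
      ((Equiv.sigmaCongrRight e).trans (Equiv.sigmaFiberEquiv g)), funext fun i ↦ ?_⟩
    exact (e (f i) ⟨i, rfl⟩).2

lemma card_perm_comp_eq [Fintype ι] [DecidableEq κ] (f g : κ → ι) :
    #{σ : Equiv.Perm κ | g ∘ σ = f} =
      if fiberCard f = fiberCard g then ∏ j, (fiberCard f j)! else 0 := by
  split_ifs with h
  · obtain ⟨τ, rfl⟩ := exists_perm_comp_eq_iff_fiberCard_eq.2 h
    rw [h]
    simp only [fiberCard, ← Fintype.card_subtype]
    rw [← DomMulAct.stabilizer_card g]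
    refine Fintype.card_congr ((Equiv.mulRight τ⁻¹).subtypeEquiv fun σ ↦ ?_)
    rw [Equiv.coe_mulRight, Equiv.Perm.coe_mul, ← Function.comp_assoc, Equiv.Perm.inv_def,
      Equiv.comp_symm_eq]
  · rw [card_eq_zero, filter_eq_empty_iff]
    exact fun σ _ hσ ↦ h (exists_perm_comp_eq_iff_fiberCard_eq.1 ⟨σ, hσ⟩)

end Fiber

/-- The standard complex Gaussian law `𝒞𝒩(0, I)` on `ℂ^ι`, with independent `𝒞𝒩(0, 1)`
coordinates. -/
noncomputable def stdComplexGaussian (ι : Type*) [Fintype ι] : Measure (ι → ℂ) :=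
  Measure.pi fun _ ↦ complexGaussian

section StdComplexGaussian

variable {ι κ : Type*} [Fintype ι] [Fintype κ]

lemma prod_mul_star_comp_eq [DecidableEq ι] (f g : κ → ι) (x : ι → ℂ) :
    ∏ i, x (f i) * star (x (g i)) = ∏ j, x j ^ fiberCard f j * star (x j) ^ fiberCard g j := by
  rw [prod_mul_distrib, prod_mul_distrib, prod_comp_eq_prod_pow_fiberCard,
    prod_comp_eq_prod_pow_fiberCard fun j ↦ star (x j)]

lemma integrable_prod_mul_star_stdComplexGaussian (f g : κ → ι) :
    Integrable (fun x : ι → ℂ ↦ ∏ i, x (f i) * star (x (g i))) (stdComplexGaussian ι) := by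
  classical
  simp only [prod_mul_star_comp_eq]
  exact .fintype_prod_dep fun j ↦ integrable_pow_mul_star_pow_complexGaussian _ _

lemma integral_prod_mul_star_stdComplexGaussian [DecidableEq ι] [DecidableEq κ] (f g : κ → ι) :
    ∫ x, ∏ i, x (f i) * star (x (g i)) ∂stdComplexGaussian ι =
      #{σ : Equiv.Perm κ | g ∘ σ = f} := by
  simp only [prod_mul_star_comp_eq]
  rw [stdComplexGaussian, integral_fintype_prod_eq_prod
    fun j z ↦ z ^ fiberCard f j * star z ^ fiberCard g j, card_perm_comp_eq]
  simp only [integral_pow_mul_star_pow_complexGaussian]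
  split_ifs with h
  · simp only [h, if_true, Nat.cast_prod]
  · obtain ⟨j, hj⟩ := Function.ne_iff.1 h
    rw [prod_eq_zero (mem_univ j) (if_neg hj), Nat.cast_zero]

lemma perm_mul_conjTranspose_eq_sum [DecidableEq ι] [DecidableEq κ] (A : Matrix κ ι ℂ) :
    perm (A * Aᴴ) = ∑ f : κ → ι, ∑ g : κ → ι,
      (∏ i, A i (f i)) * (∏ i, star (A i (g i))) * #{σ : Equiv.Perm κ | g ∘ σ = f} := by
  have hperm (σ : Equiv.Perm κ) : ∏ i, (A * Aᴴ) i (σ i) =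
      ∑ g : κ → ι, (∏ i, A i (g (σ i))) * ∏ i, star (A i (g i)) := by
    simp only [mul_apply, conjTranspose_apply, prod_univ_sum, Fintype.piFinset_univ,
      prod_mul_distrib]
    rw [← (Equiv.arrowCongr σ.symm (.refl ι)).sum_comp]
    refine sum_congr rfl fun g _ ↦ congrArg _ ?_
    exact Equiv.prod_comp σ fun i ↦ star (A i (g i))
  have hcollect (g : κ → ι) :
      ∑ σ : Equiv.Perm κ, (∏ i, A i (g (σ i))) * ∏ i, star (A i (g i)) = ∑ f : κ → ι,
        (∏ i, A i (f i)) * (∏ i, star (A i (g i))) * #{σ : Equiv.Perm κ | g ∘ σ = f} := by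
    simp only [natCast_card_filter, mul_sum, mul_ite, mul_one, mul_zero]
    rw [sum_comm]
    simp
  simp only [perm, hperm]
  rw [sum_comm]
  exact (sum_congr rfl fun g _ ↦ hcollect g).trans sum_comm

lemma ofReal_prod_norm_mulVec_sq [DecidableEq κ] (A : Matrix κ ι ℂ) (x : ι → ℂ) :
    ((∏ i, ‖(A *ᵥ x) i‖ ^ 2 : ℝ) : ℂ) = ∑ f : κ → ι, ∑ g : κ → ι,
      (∏ i, A i (f i)) * (∏ i, star (A i (g i))) * ∏ i, x (f i) * star (x (g i)) := by
  have hexpand : ∏ i, (A *ᵥ x) i = ∑ f : κ → ι, (∏ i, A i (f i)) * ∏ i, x (f i) := by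
    simp only [mulVec, dotProduct, prod_univ_sum, Fintype.piFinset_univ, prod_mul_distrib]
  calc ((∏ i, ‖(A *ᵥ x) i‖ ^ 2 : ℝ) : ℂ) = (∏ i, (A *ᵥ x) i) * star (∏ i, (A *ᵥ x) i) := by
        rw [RCLike.star_def, Complex.mul_conj', norm_prod, prod_pow, Complex.ofReal_pow]
    _ = _ := by
        rw [hexpand, star_sum, sum_mul_sum]
        simp only [star_mul', star_prod, prod_mul_distrib, mul_mul_mul_comm]

lemma perm_mul_conjTranspose_eq_integral [DecidableEq κ] (A : Matrix κ ι ℂ) :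
    perm (A * Aᴴ) = (∫ x, ∏ i, ‖(A *ᵥ x) i‖ ^ 2 ∂stdComplexGaussian ι : ℝ) := by
  classical
  have hint (f g : κ → ι) := (integrable_prod_mul_star_stdComplexGaussian f g).const_mul
    ((∏ i, A i (f i)) * ∏ i, star (A i (g i)))
  simp only [← integral_complex_ofReal, ofReal_prod_norm_mulVec_sq]
  rw [integral_finsetSum _ fun f _ ↦ integrable_finsetSum _ fun g _ ↦ hint f g,
    perm_mul_conjTranspose_eq_sum]
  refine sum_congr rfl fun f _ ↦ ?_
  rw [integral_finsetSum _ fun g _ ↦ hint f g]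
  simp only [integral_const_mul, integral_prod_mul_star_stdComplexGaussian]

lemma perm_kronecker_ones_eq_integral [DecidableEq κ] (A : Matrix κ ι ℂ) (k : ℕ) :
    perm ((A * Aᴴ) ⊗ₖ (of fun _ _ : Fin k ↦ (1 : ℂ))) =
      (∫ x, (∏ i, ‖(A *ᵥ x) i‖ ^ 2) ^ k ∂stdComplexGaussian ι : ℝ) := by
  let B : Matrix (κ × Fin k) ι ℂ := A.submatrix Prod.fst id
  have hB : (A * Aᴴ) ⊗ₖ (of fun _ _ : Fin k ↦ (1 : ℂ)) = B * Bᴴ := by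
    ext a b
    simp [B, mul_apply]
  have hprod (x : ι → ℂ) : ∏ a, ‖(B *ᵥ x) a‖ ^ 2 = (∏ i, ‖(A *ᵥ x) i‖ ^ 2) ^ k := by
    simp [B, Fintype.prod_prod_type, ← prod_pow, mulVec, dotProduct]
  simp only [hB, perm_mul_conjTranspose_eq_integral, hprod]

lemma integrable_prod_norm_sq_pow_stdComplexGaussian (β : ι → ℕ) :
    Integrable (fun x : ι → ℂ ↦ ∏ j, (‖x j‖ ^ 2) ^ β j) (stdComplexGaussian ι) := by
  refine .fintype_prod_dep (f := fun j z ↦ (‖z‖ ^ 2) ^ β j) fun j ↦ ?_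
  simpa only [← pow_mul] using integrable_norm_pow_complexGaussian (2 * β j)

lemma integral_prod_norm_sq_pow_stdComplexGaussian (β : ι → ℕ) :
    ∫ x, ∏ j, (‖x j‖ ^ 2) ^ β j ∂stdComplexGaussian ι = ∏ j, ((β j)! : ℝ) := by
  rw [stdComplexGaussian, integral_fintype_prod_eq_prod fun j z ↦ (‖z‖ ^ 2) ^ β j]
  simp only [integral_norm_sq_pow_complexGaussian]

lemma integrable_sum_norm_sq_pow_stdComplexGaussian (N : ℕ) :
    Integrable (fun x : ι → ℂ ↦ (∑ j, ‖x j‖ ^ 2) ^ N) (stdComplexGaussian ι) := by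
  classical
  simp only [sum_pow_eq_sum_piAntidiag]
  exact integrable_finsetSum _ fun β _ ↦
    (integrable_prod_norm_sq_pow_stdComplexGaussian β).const_mul _

lemma integral_sum_norm_sq_pow_stdComplexGaussian [DecidableEq ι] (N : ℕ) :
    ∫ x, (∑ j, ‖x j‖ ^ 2) ^ N ∂stdComplexGaussian ι =
      (#(piAntidiag univ N : Finset (ι → ℕ)) * N ! : ℝ) := by
  simp only [sum_pow_eq_sum_piAntidiag]
  rw [integral_finsetSum _ fun β _ ↦
    (integrable_prod_norm_sq_pow_stdComplexGaussian β).const_mul _, ← nsmul_eq_mul]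
  refine sum_eq_card_nsmul fun β hβ ↦ ?_
  rw [integral_const_mul, integral_prod_norm_sq_pow_stdComplexGaussian, ← (mem_piAntidiag.1 hβ).1,
    ← Nat.multinomial_spec, mul_comm]
  push_cast
  rfl

end StdComplexGaussian

lemma card_piAntidiag_univ_le {ι : Type*} [Fintype ι] [DecidableEq ι] (N : ℕ) :
    #(piAntidiag univ N : Finset (ι → ℕ)) ≤ (N + 1) ^ Fintype.card ι := by
  have hsub : (piAntidiag univ N : Finset (ι → ℕ)) ⊆ Fintype.piFinset fun _ ↦ range (N + 1) := by
    intro β hβ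
    rw [Fintype.mem_piFinset]
    intro j
    rw [mem_range, Nat.lt_succ_iff, ← (mem_piAntidiag.1 hβ).1]
    exact single_le_sum_of_canonicallyOrdered (mem_univ j)
  simpa using card_le_card hsub

lemma multinomial_univ_le_card_pow {κ : Type*} [Fintype κ] (f : κ → ℕ) :
    Nat.multinomial univ f ≤ Fintype.card κ ^ ∑ i, f i := by
  classical
  have h := sum_pow_eq_sum_piAntidiag univ (fun _ : κ ↦ (1 : ℕ)) (∑ i, f i)
  simp only [sum_const, card_univ, smul_eq_mul, mul_one, one_pow, prod_const_one, Nat.cast_id] at h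
  rw [h]
  exact single_le_sum_of_canonicallyOrdered (f := Nat.multinomial univ) (by simp)

lemma factorial_mul_le_pow_mul_factorial_pow (n k : ℕ) : (n * k)! ≤ (n ^ n) ^ k * k ! ^ n := by
  have hspec := Nat.multinomial_spec (univ : Finset (Fin n)) fun _ ↦ k
  have hle := multinomial_univ_le_card_pow fun _ : Fin n ↦ k
  simp only [prod_const, sum_const, card_univ, Fintype.card_fin, smul_eq_mul] at hspec hle
  rw [← hspec, mul_comm, ← pow_mul]
  gcongr

lemma le_of_frequently_pow_le_mul_pow {P M : ℝ} (hM : 0 ≤ M) {c : ℕ → ℝ}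
    (hc : ∀ r : ℝ, 1 < r → c =o[atTop] fun k ↦ r ^ k)
    (h : ∃ᶠ k in atTop, P ^ k ≤ c k * M ^ k) : P ≤ M := by
  by_contra! hMP
  obtain ⟨s, hMs, hsP⟩ := exists_between hMP
  have hs : 0 < s := hM.trans_lt hMs
  have hP : 0 < P := hs.trans hsP
  have hsmall := (hc (P / s) ((one_lt_div hs).2 hsP)).bound one_half_pos
  obtain ⟨k, hk, hck⟩ := (h.and_eventually hsmall).exists
  have hPk : 0 < P ^ k := by positivity
  have hdiv : ‖(P / s) ^ k‖ * s ^ k = P ^ k := by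
    rw [Real.norm_of_nonneg (by positivity), div_pow, div_mul_cancel₀ _ (by positivity)]
  have : P ^ k ≤ 1 / 2 * P ^ k :=
    calc P ^ k ≤ c k * M ^ k := hk
      _ ≤ ‖c k‖ * s ^ k := by gcongr; exact Real.le_norm_self _
      _ ≤ 1 / 2 * ‖(P / s) ^ k‖ * s ^ k := by gcongr
      _ = 1 / 2 * P ^ k := by rw [mul_assoc, hdiv]
  linarith

lemma isLittleO_mul_add_one_pow_const_pow (n d : ℕ) {r : ℝ} (hr : 1 < r) :
    (fun k : ℕ ↦ (n * k + 1 : ℝ) ^ d) =o[atTop] fun k ↦ r ^ k := by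
  have hlin : (fun k : ℕ ↦ (n * k + 1 : ℝ)) =O[atTop] fun k ↦ (k : ℝ) := by
    refine ((isBigO_refl _ _).const_mul_left _).add ?_
    exact (isLittleO_const_id_atTop (1 : ℝ)).isBigO.comp_tendsto tendsto_natCast_atTop_atTop
  exact (hlin.pow d).trans_isLittleO (isLittleO_pow_const_const_pow_of_one_lt d hr)

section Sphere

variable {ι κ : Type*} [Fintype ι] [Fintype κ]

lemma isCompact_setOf_sum_norm_sq_eq (r : ℝ) : IsCompact {x : ι → ℂ | ∑ i, ‖x i‖ ^ 2 = r} := by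
  refine Metric.isCompact_of_isClosed_isBounded (isClosed_eq (by fun_prop) continuous_const) ?_
  refine (Metric.isBounded_closedBall (x := 0) (r := √r)).subset fun x hx ↦ ?_
  rw [mem_closedBall_zero_iff, pi_norm_le_iff_of_nonneg r.sqrt_nonneg]
  intro i
  refine Real.le_sqrt_of_sq_le (hx ▸ ?_)
  exact single_le_sum (f := fun i ↦ ‖x i‖ ^ 2) (fun _ _ ↦ by positivity) (mem_univ i)

lemma exists_sum_norm_sq_eq [Nonempty ι] {r : ℝ} (hr : 0 ≤ r) :
    ∃ x : ι → ℂ, ∑ i, ‖x i‖ ^ 2 = r := by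
  classical
  obtain ⟨i⟩ := ‹Nonempty ι›
  refine ⟨Pi.single i (√r : ℂ), ?_⟩
  rw [Fintype.sum_eq_single i fun j hj ↦ by simp [hj]]
  simp [hr]

lemma card_pow_mul_prod_norm_mulVec_sq_le {A : Matrix κ ι ℂ} {M : ℝ}
    (hM : ∀ x : ι → ℂ, ∑ j, ‖x j‖ ^ 2 = Fintype.card κ → ∏ i, ‖(A *ᵥ x) i‖ ^ 2 ≤ M) (x : ι → ℂ) :
    (Fintype.card κ : ℝ) ^ Fintype.card κ * ∏ i, ‖(A *ᵥ x) i‖ ^ 2 ≤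
      M * (∑ j, ‖x j‖ ^ 2) ^ Fintype.card κ := by
  rcases isEmpty_or_nonempty κ with hκ | hκ
  · simpa using hM 0 (by simp)
  rcases eq_or_ne x 0 with rfl | hx
  · simp
  have hS : 0 < ∑ j, ‖x j‖ ^ 2 := by
    obtain ⟨j, hj⟩ := Function.ne_iff.1 hx
    exact sum_pos' (fun _ _ ↦ by positivity) ⟨j, mem_univ j, by positivity [norm_pos_iff.2 hj]⟩
  set S := ∑ j, ‖x j‖ ^ 2
  set c : ℝ := √(Fintype.card κ / S)
  have hc : c ^ 2 = Fintype.card κ / S := Real.sq_sqrt (by positivity)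
  have hscaled := hM ((c : ℂ) • x) (by
    simp only [Pi.smul_apply, norm_smul, Complex.norm_real, mul_pow, Real.norm_eq_abs, sq_abs, hc,
      ← mul_sum]
    exact div_mul_cancel₀ _ hS.ne')
  simp only [mulVec_smul, Pi.smul_apply, norm_smul, Complex.norm_real, mul_pow, Real.norm_eq_abs,
    sq_abs, hc, prod_mul_distrib, prod_const, card_univ] at hscaled
  rwa [div_pow, div_mul_eq_mul_div, div_le_iff₀ (by positivity)] at hscaled

lemma integral_prod_norm_mulVec_sq_pow_le {A : Matrix κ ι ℂ} {M : ℝ} (hM0 : 0 ≤ M)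
    (hM : ∀ x : ι → ℂ, ∑ j, ‖x j‖ ^ 2 = Fintype.card κ → ∏ i, ‖(A *ᵥ x) i‖ ^ 2 ≤ M) (k : ℕ) :
    ∫ x, (∏ i, ‖(A *ᵥ x) i‖ ^ 2) ^ k ∂stdComplexGaussian ι ≤
      (Fintype.card κ * k + 1) ^ Fintype.card ι * M ^ k * k ! ^ Fintype.card κ := by
  classical
  set n := Fintype.card κ
  have hn : 0 < ((n : ℝ) ^ n) ^ k := by
    have : (0 : ℝ) < n ^ n := mod_cast Nat.pow_self_pos
    positivity
  have hpointwise (x : ι → ℂ) : ((n : ℝ) ^ n) ^ k * (∏ i, ‖(A *ᵥ x) i‖ ^ 2) ^ k ≤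
      M ^ k * (∑ j, ‖x j‖ ^ 2) ^ (n * k) := by
    rw [← mul_pow, pow_mul, ← mul_pow]
    exact pow_le_pow_left₀ (by positivity) (card_pow_mul_prod_norm_mulVec_sq_le hM x) k
  refine le_of_mul_le_mul_left ?_ hn
  calc ((n : ℝ) ^ n) ^ k * ∫ x, (∏ i, ‖(A *ᵥ x) i‖ ^ 2) ^ k ∂stdComplexGaussian ι
      ≤ ∫ x, M ^ k * (∑ j, ‖x j‖ ^ 2) ^ (n * k) ∂stdComplexGaussian ι := by
        rw [← integral_const_mul]
        exact integral_mono_of_nonneg (.of_forall fun x ↦ by positivity)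
          ((integrable_sum_norm_sq_pow_stdComplexGaussian _).const_mul _) (.of_forall hpointwise)
    _ = M ^ k * (#(piAntidiag univ (n * k) : Finset (ι → ℕ)) * (n * k)!) := by
        rw [integral_const_mul, integral_sum_norm_sq_pow_stdComplexGaussian]
    _ ≤ M ^ k * ((n * k + 1) ^ Fintype.card ι * ((n ^ n) ^ k * k ! ^ n)) := by
        gcongr
        · exact_mod_cast card_piAntidiag_univ_le (n * k)
        · exact_mod_cast factorial_mul_le_pow_mul_factorial_pow n k
    _ = ((n : ℝ) ^ n) ^ k * ((n * k + 1) ^ Fintype.card ι * M ^ k * k ! ^ n) := by ring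

lemma perm_mul_conjTranspose_re_le [DecidableEq κ] {A : Matrix κ ι ℂ} {M : ℝ} (hM0 : 0 ≤ M)
    (hM : ∀ x : ι → ℂ, ∑ j, ‖x j‖ ^ 2 = Fintype.card κ → ∏ i, ‖(A *ᵥ x) i‖ ^ 2 ≤ M)
    (hpate : ∃ᶠ k : ℕ in atTop, perm (A * Aᴴ) ^ k * (k ! : ℂ) ^ Fintype.card κ ≤
      perm ((A * Aᴴ) ⊗ₖ (of fun _ _ : Fin k ↦ (1 : ℂ)))) :
    (perm (A * Aᴴ)).re ≤ M := by
  refine le_of_frequently_pow_le_mul_pow hM0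
    (fun r ↦ isLittleO_mul_add_one_pow_const_pow (Fintype.card κ) (Fintype.card ι))
    (hpate.mono fun k hk ↦ ?_)
  have hfactorial : (0 : ℝ) < k ! ^ Fintype.card κ := by positivity
  rw [perm_kronecker_ones_eq_integral, perm_mul_conjTranspose_eq_integral] at hk
  rw [perm_mul_conjTranspose_eq_integral, Complex.ofReal_re]
  refine le_of_mul_le_mul_right ?_ hfactorial
  exact le_trans (mod_cast hk) (integral_prod_norm_mulVec_sq_pow_le hM0 hM k)

lemma exists_isGreatest_prod_norm_mulVec_sq (hne : Nonempty κ → Nonempty ι) (A : Matrix κ ι ℂ) :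
    ∃ M, IsGreatest {t : ℝ | ∃ x : ι → ℂ, ∑ i, ‖x i‖ ^ 2 = (Fintype.card κ : ℝ) ∧
      t = ∏ i, ‖(A *ᵥ x) i‖ ^ 2} M := by
  have hsphere : {x : ι → ℂ | ∑ i, ‖x i‖ ^ 2 = (Fintype.card κ : ℝ)}.Nonempty := by
    rcases isEmpty_or_nonempty κ with hκ | hκ
    · exact ⟨0, by simp⟩
    · have := hne hκ
      exact exists_sum_norm_sq_eq (Nat.cast_nonneg _)
  obtain ⟨x, hx, hmax⟩ := (isCompact_setOf_sum_norm_sq_eq _).exists_isMaxOn hsphere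
    (f := fun x ↦ ∏ i, ‖(A *ᵥ x) i‖ ^ 2) (by fun_prop)
  refine ⟨_, ⟨x, hx, rfl⟩, ?_⟩
  rintro _ ⟨y, hy, rfl⟩
  exact hmax hy

end Sphere

theorem stmt18_general {ι κ : Type*} [Fintype ι] [Fintype κ] [DecidableEq κ]
    (hne : Nonempty κ → Nonempty ι) (V : Matrix ι κ ℂ)
    (hpate : ∃ᶠ k : ℕ in atTop,
      (perm (Vᴴ * V)) ^ k * ((k.factorial : ℂ)) ^ Fintype.card κ ≤
        perm ((Vᴴ * V) ⊗ₖ (Matrix.of fun _ _ : Fin k => (1 : ℂ)))) :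
    ∃ M, IsGreatest {t : ℝ | ∃ x : ι → ℂ, ∑ i, ‖x i‖ ^ 2 = (Fintype.card κ : ℝ) ∧
      t = ∏ i, ‖star (fun j => V j i) ⬝ᵥ x‖ ^ 2} M ∧ (perm (Vᴴ * V)).re ≤ M := by
  obtain ⟨M, hM⟩ := exists_isGreatest_prod_norm_mulVec_sq hne Vᴴ
  have hM0 : 0 ≤ M := by
    obtain ⟨x, -, rfl⟩ := hM.1
    positivity
  have hle := perm_mul_conjTranspose_re_le hM0 (fun x hx ↦ hM.2 ⟨x, hx, rfl⟩)
    (by simpa only [conjTranspose_conjTranspose] using hpate)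
  rw [conjTranspose_conjTranspose] at hle
  exact ⟨M, hM, hle⟩

/-- If Pate's inequality `per(A ⊗ J_k) ≥ per(A)^k (k!)^n` holds for `A = Vᴴ V` and all
positive integers `k` (with `J_k` the `k × k` all-ones matrix), then
`per A ≤ max_{‖x‖² = n} ∏ᵢ |⟨vᵢ, x⟩|²`. -/
theorem stmt18 (n : ℕ) (V : Matrix (Fin n) (Fin n) ℂ)
    (hpate : ∀ k : ℕ, 0 < k →
      (perm (Vᴴ * V)) ^ k * ((k.factorial : ℂ)) ^ n ≤
        perm ((Vᴴ * V) ⊗ₖ (Matrix.of fun _ _ : Fin k => (1 : ℂ)))) :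
    (perm (Vᴴ * V)).re ≤
      sSup {t : ℝ | ∃ x : Fin n → ℂ, ∑ i, ‖x i‖ ^ 2 = (n : ℝ) ∧
        t = ∏ i, ‖star (fun j => V j i) ⬝ᵥ x‖ ^ 2} := by
  obtain ⟨M, hM, hle⟩ := stmt18_general id V
    ((eventually_gt_atTop 0).mono fun k hk ↦ by simpa using hpate k hk).frequently
  simpa only [← hM.csSup_eq, Fintype.card_fin] using hle
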